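/- The class of languages recognized by deterministic register set automata is closed under union, intersection, and complement: for any two DRsAs A₁ and A₂ over the same alphabet Σ, there exist DRsAs recognizing L(A₁) ∪ L(A₂), L(A₁) ∩ L(A₂), and the complement of L(A₁). -/

import Mathlib

/-- A data word over alphabet `Sigma`, with data domain `𝔻 = ℕ`. -/
abbrev DataWord (Sigma : Type) : Type :=
  List (Sigma × ℕ)
/-- A transition `(src, letter, gIn, gNin, upd, tgt)` of a register set automaton.
In the update, `none` stands for the current input value `in`, and `some r`
for register `r`. -/
structure RsATrans (Sigma : Type) where
  src : ℕ
  letter : Sigma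
  gIn : Finset ℕ
  gNin : Finset ℕ
  upd : ℕ → Finset (Option ℕ)
  tgt : ℕ

/-- The register assignment obtained after taking transition `t` with current input
data value `d`, starting from the assignment `f`: each register gets the union of
the contents of the registers in its update set, together with `{d}` if the update
set contains `in`. -/
def RsATrans.apply {Sigma : Type} (t : RsATrans Sigma) (f : ℕ → Finset ℕ) (d : ℕ) :
    ℕ → Finset ℕ := fun r =>
  (t.upd r).biUnion fun o =>
    match o with
    | none => {d}
    | some r' => f r'

/-- A register set automaton (RsA); states and registers are drawn from `ℕ`. -/
structure RsA (Sigma : Type) where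
  Q : Finset ℕ
  R : Finset ℕ
  Δ : Set (RsATrans Sigma)
  I : Finset ℕ
  F : Finset ℕ
  finite_trans : Δ.Finite
  I_sub : I ⊆ Q
  F_sub : F ⊆ Q
  wf : ∀ t ∈ Δ, t.src ∈ Q ∧ t.tgt ∈ Q ∧ t.gIn ⊆ R ∧ t.gNin ⊆ R ∧
    Disjoint t.gIn t.gNin ∧ ∀ r ∈ R, ∀ r' : ℕ, some r' ∈ t.upd r → r' ∈ R

/-- One step of an RsA from configuration `c` to configuration `c'`, reading
the letter `x`. -/
def RsA.Step {Sigma : Type} (A : RsA Sigma) (c : ℕ × (ℕ → Finset ℕ)) (x : Sigma × ℕ)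
    (c' : ℕ × (ℕ → Finset ℕ)) : Prop :=
  ∃ t ∈ A.Δ, t.src = c.1 ∧ t.letter = x.1 ∧
    (∀ r ∈ t.gIn, x.2 ∈ c.2 r) ∧ (∀ r ∈ t.gNin, x.2 ∉ c.2 r) ∧
    c' = (t.tgt, t.apply c.2 x.2)

/-- `A.Run c w c'` holds iff `A` can read the data word `w` going from
configuration `c` to configuration `c'`. -/
inductive RsA.Run {Sigma : Type} (A : RsA Sigma) :
    (ℕ × (ℕ → Finset ℕ)) → DataWord Sigma → (ℕ × (ℕ → Finset ℕ)) → Prop where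
  | nil (c : ℕ × (ℕ → Finset ℕ)) : RsA.Run A c [] c
  | cons {c c' c'' : ℕ × (ℕ → Finset ℕ)} {x : Sigma × ℕ} {w : DataWord Sigma} :
      A.Step c x c' → RsA.Run A c' w c'' → RsA.Run A c (x :: w) c''

/-- The language of an RsA: words on which there exists an accepting run
starting from some initial state with all registers empty. -/
def RsA.Lang {Sigma : Type} (A : RsA Sigma) : Set (DataWord Sigma) :=
  { w | ∃ q₀ ∈ A.I, ∃ c : ℕ × (ℕ → Finset ℕ),
      A.Run (q₀, fun _ => ∅) w c ∧ c.1 ∈ A.F }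
/-- An RsA is deterministic (a DRsA) iff any two distinct transitions from the same
state over the same letter have incompatible guards. -/
def RsA.Deterministic {Sigma : Type} (A : RsA Sigma) : Prop :=
  ∀ t₁ ∈ A.Δ, ∀ t₂ ∈ A.Δ, t₁ ≠ t₂ → t₁.src = t₂.src → t₁.letter = t₂.letter →
    (t₁.gIn ∩ t₂.gNin).Nonempty ∨ (t₂.gIn ∩ t₁.gNin).Nonempty

/-- A complete deterministic machine with abstract finite state and register types. -/
structure Mach (Sigma : Type) where
  S : Type
  R : Type
  finS : Finite S
  finR : Finite R
  start : S
  δ : S → Sigma → Set R → S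
  u : S → Sigma → Set R → R → Set (Option R)
  acc : S → Prop

def Mach.step {Sigma : Type} (M : Mach Sigma) (c : M.S × (M.R → Set ℕ)) (x : Sigma × ℕ) :
    M.S × (M.R → Set ℕ) :=
  (M.δ c.1 x.1 {r | x.2 ∈ c.2 r}, fun r =>
    {v | (none ∈ M.u c.1 x.1 {r | x.2 ∈ c.2 r} r ∧ v = x.2) ∨
      ∃ r', some r' ∈ M.u c.1 x.1 {r | x.2 ∈ c.2 r} r ∧ v ∈ c.2 r'})

def Mach.run {Sigma : Type} (M : Mach Sigma) (w : DataWord Sigma) : M.S × (M.R → Set ℕ) :=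
  w.foldl M.step (M.start, fun _ => ∅)

def MRec {Sigma : Type} (L : Set (DataWord Sigma)) : Prop :=
  ∃ M : Mach Sigma, L = {w | M.acc (M.run w).1}

lemma RsATrans.mem_apply {Sigma : Type} (t : RsATrans Sigma) (f : ℕ → Finset ℕ) (d r v : ℕ) :
    v ∈ t.apply f d r ↔ (none ∈ t.upd r ∧ v = d) ∨ ∃ r', some r' ∈ t.upd r ∧ v ∈ f r' := by
  unfold RsATrans.apply
  rw [Finset.mem_biUnion]
  constructor
  · rintro ⟨o, ho, hv⟩
    cases o with
    | none => left; exact ⟨ho, by simpa using hv⟩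
    | some r' => right; exact ⟨r', ho, hv⟩
  · rintro (⟨h, rfl⟩ | ⟨r', h, hv⟩)
    · exact ⟨none, h, by simp⟩
    · exact ⟨some r', h, hv⟩

/-! ### Boolean operations on machines -/

lemma MRec.compl {Sigma : Type} {L : Set (DataWord Sigma)} (h : MRec L) : MRec Lᶜ := by
  obtain ⟨M, rfl⟩ := h
  exact ⟨{ M with acc := fun s => ¬ M.acc s }, rfl⟩

lemma MRec.empty {Sigma : Type} : MRec (∅ : Set (DataWord Sigma)) :=
  ⟨{ S := Unit, R := Unit, finS := inferInstance, finR := inferInstance, start := (),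
     δ := fun _ _ _ => (), u := fun _ _ _ _ => ∅, acc := fun _ => False }, by simp⟩

/-- Product of two machines. -/
def Mach.prod {Sigma : Type} (M N : Mach Sigma) : Mach Sigma where
  S := M.S × N.S
  R := M.R ⊕ N.R
  finS := by have := M.finS; have := N.finS; infer_instance
  finR := by have := M.finR; have := N.finR; infer_instance
  start := (M.start, N.start)
  δ := fun s a G => (M.δ s.1 a {r | Sum.inl r ∈ G}, N.δ s.2 a {r | Sum.inr r ∈ G})
  u := fun s a G r => match r with
    | Sum.inl r => Option.map Sum.inl '' M.u s.1 a {r | Sum.inl r ∈ G} r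
    | Sum.inr r => Option.map Sum.inr '' N.u s.2 a {r | Sum.inr r ∈ G} r
  acc := fun s => M.acc s.1 ∨ N.acc s.2

lemma Mach.prod_step {Sigma : Type} (M N : Mach Sigma) (c : M.S × (M.R → Set ℕ))
    (c' : N.S × (N.R → Set ℕ)) (x : Sigma × ℕ) :
    (M.prod N).step ((c.1, c'.1), Sum.elim c.2 c'.2) x =
      (((M.step c x).1, (N.step c' x).1), Sum.elim (M.step c x).2 (N.step c' x).2) := by
  refine Prod.ext rfl ?_
  funext r
  cases r with
  | inl r =>
    ext v
    simp only [Mach.step, Mach.prod, Set.mem_ofPred_eq, Sum.elim_inl]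
    constructor
    · rintro (⟨⟨o, ho, h⟩, rfl⟩ | ⟨r', ⟨o, ho, h⟩, hv⟩)
      · cases o with
        | none => exact Or.inl ⟨ho, rfl⟩
        | some _ => simp at h
      · cases o with
        | none => simp at h
        | some s =>
          simp only [Option.map_some, Option.some.injEq] at h
          subst h
          exact Or.inr ⟨s, ho, hv⟩
    · rintro (⟨h, rfl⟩ | ⟨r', h, hv⟩)
      · exact Or.inl ⟨⟨none, h, rfl⟩, rfl⟩
      · exact Or.inr ⟨Sum.inl r', ⟨some r', h, rfl⟩, hv⟩
  | inr r =>
    ext v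
    simp only [Mach.step, Mach.prod, Set.mem_ofPred_eq, Sum.elim_inr]
    constructor
    · rintro (⟨⟨o, ho, h⟩, rfl⟩ | ⟨r', ⟨o, ho, h⟩, hv⟩)
      · cases o with
        | none => exact Or.inl ⟨ho, rfl⟩
        | some _ => simp at h
      · cases o with
        | none => simp at h
        | some s =>
          simp only [Option.map_some, Option.some.injEq] at h
          subst h
          exact Or.inr ⟨s, ho, hv⟩
    · rintro (⟨h, rfl⟩ | ⟨r', h, hv⟩)
      · exact Or.inl ⟨⟨none, h, rfl⟩, rfl⟩
      · exact Or.inr ⟨Sum.inr r', ⟨some r', h, rfl⟩, hv⟩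

lemma Mach.prod_foldl {Sigma : Type} (M N : Mach Sigma) (w : DataWord Sigma) :
    ∀ (c : M.S × (M.R → Set ℕ)) (c' : N.S × (N.R → Set ℕ)),
    w.foldl (M.prod N).step ((c.1, c'.1), Sum.elim c.2 c'.2) =
      (((w.foldl M.step c).1, (w.foldl N.step c').1),
        Sum.elim (w.foldl M.step c).2 (w.foldl N.step c').2) := by
  induction w with
  | nil => intro c c'; rfl
  | cons x w ih =>
    intro c c'
    simp only [List.foldl_cons]
    rw [Mach.prod_step]
    exact ih _ _

lemma MRec.union {Sigma : Type} {L K : Set (DataWord Sigma)} (h : MRec L) (h' : MRec K) :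
    MRec (L ∪ K) := by
  obtain ⟨M, rfl⟩ := h
  obtain ⟨N, rfl⟩ := h'
  refine ⟨M.prod N, ?_⟩
  ext w
  have h0 : ((M.prod N).start, fun _ => ∅) =
      (((M.start, N.start), Sum.elim (fun _ => ∅) (fun _ => ∅)) :
        (M.S × N.S) × (M.R ⊕ N.R → Set ℕ)) := by
    refine Prod.ext rfl ?_
    funext r
    cases r <;> rfl
  have e : ((M.prod N).run w).1 = ((M.run w).1, (N.run w).1) :=
    (congrArg (fun c => (w.foldl (M.prod N).step c).1) h0).trans
      (congrArg Prod.fst (Mach.prod_foldl M N w (M.start, fun _ => ∅) (N.start, fun _ => ∅)))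
  change (M.acc (M.run w).1 ∨ N.acc (N.run w).1) ↔ (M.prod N).acc ((M.prod N).run w).1
  rw [e]
  rfl

lemma MRec.inter {Sigma : Type} {L K : Set (DataWord Sigma)} (h : MRec L) (h' : MRec K) :
    MRec (L ∩ K) := by
  have := (h.compl.union h'.compl).compl
  rwa [Set.compl_union, compl_compl, compl_compl] at this

/-! ### From DRsA to machines -/

def RsATrans.Ok {Sigma : Type} (t : RsATrans Sigma) (A : RsA Sigma) (q : ℕ) (a : Sigma)
    (G : Set {r // r ∈ A.R}) : Prop :=
  t ∈ A.Δ ∧ t.src = q ∧ t.letter = a ∧ (∀ r : {r // r ∈ A.R}, r.1 ∈ t.gIn → r ∈ G) ∧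
    (∀ r : {r // r ∈ A.R}, r.1 ∈ t.gNin → r ∉ G)

open Classical in
noncomputable def RsA.toMach {Sigma : Type} (A : RsA Sigma) (q₀ : {q // q ∈ A.Q}) :
    Mach Sigma where
  S := Option {q // q ∈ A.Q}
  R := {r // r ∈ A.R}
  finS := inferInstance
  finR := inferInstance
  start := some q₀
  δ := fun s a G => match s with
    | none => none
    | some q => if h : ∃ t : RsATrans Sigma, t.Ok A q a G then
        some ⟨h.choose.tgt, (A.wf _ h.choose_spec.1).2.1⟩ else none
  u := fun s a G r => match s with
    | none => ∅
    | some q => {o | ∃ t : RsATrans Sigma, t.Ok A q a G ∧ o.map Subtype.val ∈ t.upd r}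
  acc := fun s => ∃ q, s = some q ∧ q.1 ∈ A.F

lemma RsA.toMach_none {Sigma : Type} (A : RsA Sigma) (q₀ : {q // q ∈ A.Q})
    (w : DataWord Sigma) : ∀ c : (A.toMach q₀).S × ((A.toMach q₀).R → Set ℕ), c.1 = none →
    (w.foldl (A.toMach q₀).step c).1 = none := by
  induction w with
  | nil => intro c h; exact h
  | cons x w ih =>
    rintro ⟨c1, c2⟩ h
    change c1 = none at h
    subst h
    exact ih _ rfl

lemma RsATrans.Ok.unique {Sigma : Type} {A : RsA Sigma} (hA : A.Deterministic)
    {t t' : RsATrans Sigma} {q : ℕ} {a : Sigma} {G : Set {r // r ∈ A.R}}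
    (h : t.Ok A q a G) (h' : t'.Ok A q a G) : t = t' := by
  by_contra hne
  obtain ⟨m, e, l, i, n⟩ := h
  obtain ⟨m', e', l', i', n'⟩ := h'
  rcases hA t m t' m' hne (e.trans e'.symm) (l.trans l'.symm) with ⟨r, hr⟩ | ⟨r, hr⟩
  · rw [Finset.mem_inter] at hr
    have hR : r ∈ A.R := (A.wf t m).2.2.1 hr.1
    exact n' ⟨r, hR⟩ hr.2 (i ⟨r, hR⟩ hr.1)
  · rw [Finset.mem_inter] at hr
    have hR : r ∈ A.R := (A.wf t' m').2.2.1 hr.1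
    exact n ⟨r, hR⟩ hr.2 (i' ⟨r, hR⟩ hr.1)

lemma RsA.toMach_sim {Sigma : Type} (A : RsA Sigma) (hA : A.Deterministic)
    (q₀ : {q // q ∈ A.Q}) (w : DataWord Sigma) :
    ∀ (q : {q // q ∈ A.Q}) (f : ℕ → Finset ℕ) (g : {r // r ∈ A.R} → Set ℕ),
    (∀ r, g r = (f r.1 : Set ℕ)) →
    ((∃ c', A.Run (q.1, f) w c' ∧ c'.1 ∈ A.F) ↔
      (A.toMach q₀).acc (w.foldl (A.toMach q₀).step (some q, g)).1) := by
  induction w with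
  | nil =>
    intro q f g hg
    constructor
    · rintro ⟨c', h, hF⟩
      cases h
      exact ⟨q, rfl, hF⟩
    · rintro ⟨q', h, hF⟩
      simp only [List.foldl_nil, Option.some.injEq] at h
      subst h
      exact ⟨_, RsA.Run.nil _, hF⟩
  | cons x w ih =>
    intro q f g hg
    have key : ∀ t : RsATrans Sigma, t.Ok A q x.1 {r | x.2 ∈ g r} ↔
        (t ∈ A.Δ ∧ t.src = q ∧ t.letter = x.1 ∧ (∀ r ∈ t.gIn, x.2 ∈ f r) ∧
          (∀ r ∈ t.gNin, x.2 ∉ f r)) := by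
      intro t
      unfold RsATrans.Ok
      simp only [Set.mem_ofPred_eq, hg, Finset.mem_coe]
      constructor
      · rintro ⟨m, e, l, i, n⟩
        exact ⟨m, e, l, fun r hr => i ⟨r, (A.wf t m).2.2.1 hr⟩ hr,
          fun r hr => n ⟨r, (A.wf t m).2.2.2.1 hr⟩ hr⟩
      · rintro ⟨m, e, l, i, n⟩
        exact ⟨m, e, l, fun r hr => i r hr, fun r hr => n r hr⟩
    by_cases h : ∃ t : RsATrans Sigma, t.Ok A q x.1 {r | x.2 ∈ g r}
    · obtain ⟨t, ht⟩ := h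
      have hwf := A.wf t ht.1
      have huniq : ∀ t' : RsATrans Sigma, t'.Ok A q x.1 {r | x.2 ∈ g r} → t' = t :=
        fun t' h' => h'.unique hA ht
      obtain ⟨g', hg'⟩ : ∃ g', g' = ((A.toMach q₀).step (some q, g) x).2 := ⟨_, rfl⟩
      have hstep : (A.toMach q₀).step (some q, g) x = (some ⟨t.tgt, hwf.2.1⟩, g') := by
        refine Prod.ext ?_ hg'.symm
        have hex : ∃ t : RsATrans Sigma, t.Ok A q x.1 {r | x.2 ∈ g r} := ⟨t, ht⟩
        have : ((A.toMach q₀).step (some q, g) x).1 =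
          some ⟨hex.choose.tgt, (A.wf _ hex.choose_spec.1).2.1⟩ := dif_pos hex
        rw [this]
        have := huniq _ hex.choose_spec
        congr 2
        rw [this]
      have hrel : ∀ r, g' r = (t.apply f x.2 r.1 : Set ℕ) := by
        intro r
        ext v
        rw [Finset.mem_coe, RsATrans.mem_apply, hg']
        change ((∃ t' : RsATrans Sigma, t'.Ok A q x.1 {r | x.2 ∈ g r} ∧
            none ∈ t'.upd r.1) ∧ v = x.2) ∨
          (∃ r' : {r // r ∈ A.R}, (∃ t' : RsATrans Sigma, t'.Ok A q x.1 {r | x.2 ∈ g r} ∧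
            some r'.1 ∈ t'.upd r.1) ∧ v ∈ g r') ↔ _
        constructor
        · rintro (⟨⟨t', h', hn⟩, rfl⟩ | ⟨r', ⟨t', h', hn⟩, hv⟩)
          · rw [huniq t' h'] at hn
            exact Or.inl ⟨hn, rfl⟩
          · rw [huniq t' h'] at hn
            rw [hg] at hv
            exact Or.inr ⟨r', hn, hv⟩
        · rintro (⟨hn, rfl⟩ | ⟨r', hn, hv⟩)
          · exact Or.inl ⟨⟨t, ht, hn⟩, rfl⟩
          · refine Or.inr ⟨⟨r', hwf.2.2.2.2.2 r.1 r.2 r' hn⟩, ⟨t, ht, hn⟩, ?_⟩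
            rw [hg]
            exact hv
      rw [List.foldl_cons, hstep]
      refine Iff.trans ?_ (ih ⟨t.tgt, hwf.2.1⟩ (t.apply f x.2) g' hrel)
      constructor
      · rintro ⟨c', hr, hF⟩
        cases hr with
        | cons hs hr =>
          obtain ⟨t', m, e, l, i, n, rfl⟩ := hs
          have := huniq t' ((key t').2 ⟨m, e, l, i, n⟩)
          subst this
          exact ⟨c', hr, hF⟩
      · rintro ⟨c', hr, hF⟩
        obtain ⟨m, e, l, i, n⟩ := (key t).1 ht
        exact ⟨c', RsA.Run.cons ⟨t, m, e, l, i, n, rfl⟩ hr, hF⟩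
    · have hstep : ((A.toMach q₀).step (some q, g) x).1 = none := dif_neg h
      rw [List.foldl_cons, RsA.toMach_none A q₀ w _ hstep]
      constructor
      · rintro ⟨c', hr, hF⟩
        cases hr with
        | cons hs hr =>
          obtain ⟨t', m, e, l, i, n, rfl⟩ := hs
          exact (h ⟨t', (key t').2 ⟨m, e, l, i, n⟩⟩).elim
      · rintro ⟨q', h', _⟩
        cases h'

lemma RsA.mrec {Sigma : Type} (A : RsA Sigma) (hA : A.Deterministic) : MRec A.Lang := by
  have key : ∀ J : Finset ℕ, J ⊆ A.Q → MRec {w | ∃ q₀ ∈ J, ∃ c : ℕ × (ℕ → Finset ℕ),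
      A.Run (q₀, fun _ => ∅) w c ∧ c.1 ∈ A.F} := by
    intro J
    induction J using Finset.induction_on with
    | empty => intro _; simpa using MRec.empty
    | insert q J _ ih =>
      intro hJ
      have hq : q ∈ A.Q := hJ (Finset.mem_insert_self _ _)
      have h1 : MRec {w | ∃ c : ℕ × (ℕ → Finset ℕ),
          A.Run (q, fun _ => ∅) w c ∧ c.1 ∈ A.F} := by
        refine ⟨A.toMach ⟨q, hq⟩, ?_⟩
        ext w
        exact RsA.toMach_sim A hA ⟨q, hq⟩ w ⟨q, hq⟩ (fun _ => ∅) (fun _ => ∅) (by simp)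
      have h2 := h1.union (ih ((Finset.subset_insert _ _).trans hJ))
      convert h2 using 1
      ext w
      simp only [Finset.mem_insert, exists_eq_or_imp, Set.mem_ofPred_eq, Set.mem_union]
  exact key A.I A.I_sub

/-! ### From machines to DRsA -/

noncomputable def Mach.trans {Sigma : Type} (M : Mach Sigma) [Finite M.S] [Finite M.R]
    (e : M.S → ℕ) (ρ : M.R → ℕ) (p : M.S × Sigma × Set M.R) : RsATrans Sigma where
  src := e p.1
  letter := p.2.1
  gIn := (Set.toFinite (ρ '' p.2.2)).toFinset
  gNin := (Set.toFinite (ρ '' p.2.2ᶜ)).toFinset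
  upd := fun n => (Set.toFinite (Option.map ρ ''
    {o | ∃ r, ρ r = n ∧ o ∈ M.u p.1 p.2.1 p.2.2 r})).toFinset
  tgt := e (M.δ p.1 p.2.1 p.2.2)

lemma MRec.drsa {Sigma : Type} [Finite Sigma] {L : Set (DataWord Sigma)} (h : MRec L) :
    ∃ A : RsA Sigma, A.Deterministic ∧ A.Lang = L := by
  obtain ⟨M, rfl⟩ := h
  have := M.finS
  have := M.finR
  obtain ⟨e, he⟩ : ∃ e : M.S → ℕ, Function.Injective e := by
    obtain ⟨n, ⟨f⟩⟩ := Finite.exists_equiv_fin M.S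
    exact ⟨fun s => (f s).1, fun a b h => f.injective (Fin.ext h)⟩
  obtain ⟨ρ, hρ⟩ : ∃ ρ : M.R → ℕ, Function.Injective ρ := by
    obtain ⟨n, ⟨f⟩⟩ := Finite.exists_equiv_fin M.R
    exact ⟨fun s => (f s).1, fun a b h => f.injective (Fin.ext h)⟩
  let A : RsA Sigma :=
    { Q := (Set.toFinite (Set.range e)).toFinset
      R := (Set.toFinite (Set.range ρ)).toFinset
      Δ := Set.range (M.trans e ρ)
      I := {e M.start}
      F := (Set.toFinite (e '' {s | M.acc s})).toFinset
      finite_trans := Set.finite_range _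
      I_sub := by intro x; simp; rintro rfl; exact ⟨_, rfl⟩
      F_sub := by intro x; simp; rintro s _ rfl; exact ⟨_, rfl⟩
      wf := by
        rintro _ ⟨p, rfl⟩
        refine ⟨by simp [Mach.trans], by simp [Mach.trans], ?_, ?_, ?_, ?_⟩
        · intro x; simp [Mach.trans]; rintro s _ rfl; exact ⟨_, rfl⟩
        · intro x; simp [Mach.trans]; rintro s _ rfl; exact ⟨_, rfl⟩
        · rw [Finset.disjoint_left]
          intro x hx hx'
          simp only [Mach.trans, Set.Finite.mem_toFinset] at hx hx'
          obtain ⟨r, hr, rfl⟩ := hx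
          obtain ⟨r', hr', h⟩ := hx'
          rw [hρ h] at hr'
          exact hr' hr
        · intro r _ r' h
          simp only [Mach.trans, Set.Finite.mem_toFinset] at h ⊢
          obtain ⟨o, _, h⟩ := h
          cases o with
          | none => simp at h
          | some s => exact ⟨s, by simpa using h⟩ }
  refine ⟨A, ?_, ?_⟩
  · rintro _ ⟨⟨s, a, G⟩, rfl⟩ _ ⟨⟨s', a', G'⟩, rfl⟩ hne hs ha
    have hs : s = s' := he hs
    have ha : a = a' := ha
    subst hs ha
    have hG : G ≠ G' := by rintro rfl; exact hne rfl
    have : ∃ r, ¬ (r ∈ G ↔ r ∈ G') := by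
      by_contra hcon
      push Not at hcon
      exact hG (Set.ext hcon)
    obtain ⟨r, hr⟩ := this
    by_cases h : r ∈ G
    · left
      refine ⟨ρ r, ?_⟩
      simp only [Mach.trans, Finset.mem_inter, Set.Finite.mem_toFinset]
      exact ⟨⟨r, h, rfl⟩, ⟨r, fun h' => hr ⟨fun _ => h', fun _ => h⟩, rfl⟩⟩
    · right
      refine ⟨ρ r, ?_⟩
      simp only [Mach.trans, Finset.mem_inter, Set.Finite.mem_toFinset]
      exact ⟨⟨r, by tauto, rfl⟩, ⟨r, h, rfl⟩⟩
  · have sim : ∀ (w : DataWord Sigma) (s : M.S) (f : ℕ → Finset ℕ) (g : M.R → Set ℕ),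
        (∀ r, g r = (f (ρ r) : Set ℕ)) →
        ((∃ c', A.Run (e s, f) w c' ∧ c'.1 ∈ A.F) ↔ M.acc (w.foldl M.step (s, g)).1) := by
      intro w
      induction w with
      | nil =>
        intro s f g _
        constructor
        · rintro ⟨c', h, hF⟩
          cases h
          simp only [A, Set.Finite.mem_toFinset] at hF
          obtain ⟨s', h, h'⟩ := hF
          rw [he h'] at h
          exact h
        · intro h
          refine ⟨_, RsA.Run.nil _, ?_⟩
          simp only [A, Set.Finite.mem_toFinset]
          exact ⟨s, h, rfl⟩
      | cons x w ih =>
        intro s f g hg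
        let t := M.trans e ρ (s, x.1, {r | x.2 ∈ g r})
        have hrel : ∀ r, (M.step (s, g) x).2 r = (t.apply f x.2 (ρ r) : Set ℕ) := by
          intro r
          ext v
          rw [Finset.mem_coe, RsATrans.mem_apply]
          simp only [t, Mach.trans, Mach.step, Set.Finite.mem_toFinset, Set.mem_image,
            Set.mem_ofPred_eq]
          constructor
          · rintro (⟨h, rfl⟩ | ⟨r', h, hv⟩)
            · exact Or.inl ⟨⟨none, ⟨r, rfl, h⟩, rfl⟩, rfl⟩
            · rw [hg] at hv
              exact Or.inr ⟨ρ r', ⟨some r', ⟨r, rfl, h⟩, rfl⟩, hv⟩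
          · rintro (⟨⟨o, ⟨r₁, h₁, h⟩, ho⟩, rfl⟩ | ⟨r', ⟨o, ⟨r₁, h₁, h⟩, ho⟩, hv⟩)
            · have := hρ h₁
              subst this
              cases o with
              | none => exact Or.inl ⟨h, rfl⟩
              | some _ => simp at ho
            · have := hρ h₁
              subst this
              cases o with
              | none => simp at ho
              | some r₂ =>
                simp only [Option.map_some, Option.some.injEq] at ho
                subst ho
                refine Or.inr ⟨r₂, h, ?_⟩
                rw [hg]
                exact hv
        rw [List.foldl_cons]
        have ih' := ih (M.step (s, g) x).1 (t.apply f x.2) (M.step (s, g) x).2 hrel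
        rw [Prod.mk.eta] at ih'
        rw [← ih']
        constructor
        · rintro ⟨c', hr, hF⟩
          cases hr with
          | cons hs hr =>
            obtain ⟨_, ⟨⟨s', a, G⟩, rfl⟩, hsrc, l, i, n, rfl⟩ := hs
            have hsrc : s' = s := he hsrc
            have l : a = x.1 := l
            subst hsrc l
            have hG : G = {r | x.2 ∈ g r} := by
              ext r
              simp only [Set.mem_ofPred_eq, hg, Finset.mem_coe]
              constructor
              · intro h
                exact i (ρ r) (by simp only [Mach.trans, Set.Finite.mem_toFinset]; exact ⟨r, h, rfl⟩)
              · intro h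
                by_contra h'
                exact n (ρ r) (by
                  simp only [Mach.trans, Set.Finite.mem_toFinset]; exact ⟨r, h', rfl⟩) h
            subst hG
            exact ⟨c', hr, hF⟩
        · rintro ⟨c', hr, hF⟩
          refine ⟨c', RsA.Run.cons ⟨t, ⟨_, rfl⟩, rfl, rfl, ?_, ?_, rfl⟩ hr, hF⟩
          · intro r hr
            simp only [t, Mach.trans, Set.Finite.mem_toFinset] at hr
            obtain ⟨r, h, rfl⟩ := hr
            simpa [hg] using h
          · intro r hr
            simp only [t, Mach.trans, Set.Finite.mem_toFinset] at hr
            obtain ⟨r, h, rfl⟩ := hr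
            simpa [hg] using h
    ext w
    rw [Set.mem_ofPred_eq]
    unfold Mach.run
    rw [← sim w M.start (fun _ => ∅) (fun _ => ∅) (by simp)]
    simp [RsA.Lang, A]

/-- DRsA languages are closed under union, intersection,
and complement. -/
theorem drsa_closed_under_boolean_ops (Sigma : Type) [Fintype Sigma] [Nonempty Sigma]
    (A₁ A₂ : RsA Sigma) (h₁ : A₁.Deterministic) (h₂ : A₂.Deterministic) :
    (∃ A : RsA Sigma, A.Deterministic ∧ RsA.Lang A = RsA.Lang A₁ ∪ RsA.Lang A₂) ∧
    (∃ A : RsA Sigma, A.Deterministic ∧ RsA.Lang A = RsA.Lang A₁ ∩ RsA.Lang A₂) ∧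
    (∃ A : RsA Sigma, A.Deterministic ∧ RsA.Lang A = (RsA.Lang A₁)ᶜ) := by
  have r₁ := A₁.mrec h₁
  have r₂ := A₂.mrec h₂
  exact ⟨(r₁.union r₂).drsa, (r₁.inter r₂).drsa, r₁.compl.drsa⟩
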